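/- Let G_{n,d} be the configuration-model random d-regular multigraph on n vertices and let Z_{i,j} be the number of vertex subsets S with |S| = i inducing exactly j edges. Suppose 1 ≤ k ≤ d/2 and 1 ≤ i ≤ (2k/d)·n with k·i an integer. Then over the range k·i ≤ j ≤ (d/2)·i, the expectation E[Z_{i,j}] is maximized at j = k·i; that is, E[Z_{i,j}] ≤ E[Z_{i,ki}] for all integers j with k·i ≤ j ≤ (d/2)·i. -/

import Mathlib

/-!
The configuration model; over the range `ki ≤ j ≤ (d/2) i` the expectation `E[Z_{i,j}]`
is maximized at `j = ki`.
-/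

open scoped Classical

noncomputable section

def pairings (n d : ℕ) : Finset ((Fin n × Fin d) ≃ (Fin n × Fin d)) :=
  Finset.univ.filter fun M => (∀ x, M (M x) = x) ∧ ∀ x, M x ≠ x

/-- The number of edges (loops and parallel edges counted) of the sub-multigraph induced on
`S` by the configuration-model multigraph of the pairing `M`. -/
def edgesWithin {n d : ℕ} (M : (Fin n × Fin d) ≃ (Fin n × Fin d)) (S : Finset (Fin n)) : ℕ :=
  (Finset.univ.filter fun h : Fin n × Fin d => h.1 ∈ S ∧ (M h).1 ∈ S).card / 2

/-- `Z_{i,j}`: the number of vertex subsets `S` with `|S| = i` inducing exactly `j` edges. -/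
def Zcount (n d i j : ℕ) (M : (Fin n × Fin d) ≃ (Fin n × Fin d)) : ℕ :=
  (Finset.univ.filter fun S : Finset (Fin n) => S.card = i ∧ edgesWithin M S = j).card

/-- The expectation of `Z_{i,j}` under the uniform distribution on pairings. -/
def EZ (n d i j : ℕ) : ℝ :=
  (∑ M ∈ pairings n d, (Zcount n d i j M : ℝ)) / ((pairings n d).card : ℝ)

/-!
Fix `S` with `|S| = i` and let `A` be its set of half-edges, `a = d i` of the `N = n d` half-edges.
Replace an edge `xy` inside `S` and an edge `uv` outside `S` by the edges `xu` and `yv`. This is a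
bijection, inverted by a switching of the same kind, so counting the available switchings from both
ends relates the numbers `p (j + 1)` and `p j` of pairings inducing `j + 1` and `j` edges on `S`:

  `p (j + 1) * (2 (j + 1) (N - 2 a + 2 (j + 1))) = p j * ((a - 2 j) (a - 2 j - 1))`.

Hence `p j` is nonincreasing for `j ≥ a² / (2 N) = d i² / (2 n)`, which is roughly the mean number
of edges inside `S`; summing over `S` transfers this to `E[Z_{i,j}]`. The point `j = k i` lies in
this range exactly when `i ≤ (2 k / d) n`.
-/

open Finset Equiv

section Switching

variable {α : Type*} {M : Perm α} {A : Finset α} {x u h : α}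

/-- A perfect matching of the points of `α`, encoded as the fixed-point-free involution that sends
each point to its partner. -/
def IsPairing (M : Perm α) : Prop :=
  Function.Involutive M ∧ ∀ x, M x ≠ x

variable [DecidableEq α]

/-- The points of `A` whose partner is in `A`; for a pairing, the endpoints of the edges
inside `A`. -/
def internalPoints (A : Finset α) (M : Perm α) : Finset α :=
  {h ∈ A | M h ∈ A}

/-- The points of `A` whose partner is outside `A`; for a pairing, they enumerate the edges
leaving `A`. -/
def boundaryPoints (A : Finset α) (M : Perm α) : Finset α :=
  {h ∈ A | M h ∉ A}

/-- The switching of the pairing `M` that joins `x` to `u`, and their former partners to each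
other; it is a conjugate of `M`, which keeps it a pairing. -/
def switch (M : Perm α) (x u : α) : Perm α :=
  swap (M x) u * M * swap (M x) u

lemma mem_internalPoints : h ∈ internalPoints A M ↔ h ∈ A ∧ M h ∈ A :=
  mem_filter

lemma mem_boundaryPoints : h ∈ boundaryPoints A M ↔ h ∈ A ∧ M h ∉ A :=
  mem_filter

lemma card_internalPoints_add_card_boundaryPoints (A : Finset α) (M : Perm α) :
    #(internalPoints A M) + #(boundaryPoints A M) = #A :=
  card_filter_add_card_filter_not _

lemma IsPairing.apply_mem_internalPoints (hM : IsPairing M) (hx : x ∈ internalPoints A M) :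
    M x ∈ internalPoints A M := by
  rw [mem_internalPoints] at hx ⊢
  exact ⟨hx.2, (hM.1 x).symm ▸ hx.1⟩

lemma IsPairing.even_card_internalPoints (hM : IsPairing M) : Even #(internalPoints A M) := by
  have parity : ∑ _ ∈ internalPoints A M, (1 : ZMod 2) = 0 :=
    sum_involution (fun x _ ↦ M x) (fun _ _ ↦ by decide) (fun x _ _ ↦ hM.2 x)
      (fun _ ↦ hM.apply_mem_internalPoints) (fun x _ ↦ hM.1 x)
  rwa [sum_const, nsmul_eq_mul, mul_one, ZMod.natCast_eq_zero_iff_even] at parity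

lemma IsPairing.isPairing_switch (hM : IsPairing M) (x u : α) : IsPairing (switch M x u) := by
  refine ⟨fun h ↦ by simp [switch, hM.1 _], fun h hfix ↦ hM.2 (swap (M x) u h) ?_⟩
  simpa [switch] using congrArg (swap (M x) u) hfix

lemma IsPairing.switch_apply_left (hM : IsPairing M) (hxu : x ≠ u) : switch M x u x = u := by
  simp [switch, swap_apply_of_ne_of_ne (hM.2 x).symm hxu]

lemma IsPairing.switch_apply_partner (hM : IsPairing M) (hxu : x ≠ u) :
    switch M x u (M x) = M u := by
  simp [switch, swap_apply_of_ne_of_ne (M.injective.ne hxu.symm) (hM.2 u)]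

lemma IsPairing.switch_apply_of_ne (hM : IsPairing M) (hx : h ≠ x) (hMx : h ≠ M x) (hu : h ≠ u)
    (hMu : h ≠ M u) : switch M x u h = M h := by
  have hMh : M h ≠ u := fun e ↦ hMu (by rw [← e, hM.1])
  simp [switch, swap_apply_of_ne_of_ne hMx hu,
    swap_apply_of_ne_of_ne (M.injective.ne hx) hMh]

lemma IsPairing.switch_switch (hM : IsPairing M) (hxu : x ≠ u) :
    switch (switch M x u) x (M x) = M := by
  rw [switch, hM.switch_apply_left hxu, switch, swap_comm u]
  simp [mul_assoc]

/-- Performs the switching `switch M x u` and records the former partner of `x`, which is what is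
needed to undo it. -/
def performSwitching (s : Σ _ : Perm α, α × α) : Σ _ : Perm α, α × α :=
  ⟨switch s.1 s.2.1 s.2.2, s.2.1, s.1 s.2.1⟩

lemma IsPairing.performSwitching_performSwitching (hM : IsPairing M) (hxu : x ≠ u) :
    performSwitching (performSwitching ⟨M, x, u⟩) = ⟨M, x, u⟩ := by
  simp [performSwitching, hM.switch_switch hxu, hM.switch_apply_left hxu]

variable [Fintype α]

/-- The points outside `A` whose partner is outside `A`; for a pairing, the endpoints of the edges
avoiding `A`. -/
def externalPoints (A : Finset α) (M : Perm α) : Finset α :=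
  internalPoints Aᶜ M

lemma mem_externalPoints : h ∈ externalPoints A M ↔ h ∉ A ∧ M h ∉ A := by
  simp [externalPoints, mem_internalPoints]

lemma IsPairing.card_boundaryPoints_compl (hM : IsPairing M) :
    #(boundaryPoints Aᶜ M) = #(boundaryPoints A M) := by
  refine card_nbij' M M ?_ ?_ (fun h _ ↦ hM.1 h) (fun h _ ↦ hM.1 h) <;>
    simp +contextual [Set.MapsTo, mem_boundaryPoints, hM.1 _]

lemma IsPairing.card_externalPoints_add_card_boundaryPoints (hM : IsPairing M) :
    #(externalPoints A M) + #(boundaryPoints A M) = #Aᶜ := by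
  rw [← hM.card_boundaryPoints_compl]
  exact card_internalPoints_add_card_boundaryPoints Aᶜ M

lemma IsPairing.internalPoints_switch (hM : IsPairing M) (hx : x ∈ internalPoints A M)
    (hu : u ∈ externalPoints A M) :
    internalPoints A (switch M x u) = internalPoints A M \ {x, M x} := by
  rw [mem_internalPoints] at hx
  rw [mem_externalPoints] at hu
  have ne_of_mem {y z : α} (hy : y ∈ A) (hz : z ∉ A) : y ≠ z := ne_of_mem_of_not_mem hy hz
  have hxu := ne_of_mem hx.1 hu.1
  ext h
  simp only [mem_internalPoints, mem_sdiff, mem_insert, mem_singleton, and_assoc]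
  refine and_congr_right fun hA ↦ ?_
  rcases eq_or_ne h x with rfl | hhx
  · simp [hM.switch_apply_left hxu, hu.1]
  rcases eq_or_ne h (M x) with rfl | hhMx
  · simp [hM.switch_apply_partner hxu, hu.2]
  rw [hM.switch_apply_of_ne hhx hhMx (ne_of_mem hA hu.1) (ne_of_mem hA hu.2)]
  simp [hhx, hhMx]

lemma IsPairing.card_internalPoints_switch (hM : IsPairing M) (hx : x ∈ internalPoints A M)
    (hu : u ∈ externalPoints A M) :
    #(internalPoints A (switch M x u)) + 2 = #(internalPoints A M) := by
  have edge_subset : {x, M x} ⊆ internalPoints A M := by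
    simp [insert_subset_iff, hx, hM.apply_mem_internalPoints hx]
  rw [hM.internalPoints_switch hx hu, ← card_pair (hM.2 x).symm]
  exact card_sdiff_add_card_eq_card edge_subset

/-- The pairings of `α` with exactly `j` edges inside `A`, that is, with `2 * j` endpoints of
such edges. -/
def pairingsInducing (A : Finset α) (j : ℕ) : Finset (Perm α) :=
  {M | IsPairing M ∧ #(internalPoints A M) = 2 * j}

lemma mem_pairingsInducing {j : ℕ} :
    M ∈ pairingsInducing A j ↔ IsPairing M ∧ #(internalPoints A M) = 2 * j := by
  simp [pairingsInducing]

/-- The switchings that remove an edge inside `A` from a pairing with `j` such edges: `x` is an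
endpoint of that edge and `u` an endpoint of an edge avoiding `A`. -/
def removalSwitchings (A : Finset α) (j : ℕ) : Finset (Σ _ : Perm α, α × α) :=
  (pairingsInducing A j).sigma fun M ↦ internalPoints A M ×ˢ externalPoints A M

/-- The switchings that create an edge inside `A` in a pairing with `j` such edges: `x` and `u` are
endpoints in `A` of two different edges leaving `A`. -/
def creationSwitchings (A : Finset α) (j : ℕ) : Finset (Σ _ : Perm α, α × α) :=
  (pairingsInducing A j).sigma fun M ↦ (boundaryPoints A M).offDiag

lemma mem_removalSwitchings {j : ℕ} : ⟨M, x, u⟩ ∈ removalSwitchings A j ↔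
    M ∈ pairingsInducing A j ∧ x ∈ internalPoints A M ∧ u ∈ externalPoints A M := by
  simp [removalSwitchings]

lemma mem_creationSwitchings {j : ℕ} : ⟨M, x, u⟩ ∈ creationSwitchings A j ↔
    M ∈ pairingsInducing A j ∧ x ∈ boundaryPoints A M ∧ u ∈ boundaryPoints A M ∧ x ≠ u := by
  simp [creationSwitchings]

lemma performSwitching_mem_creationSwitchings {j : ℕ}
    (hs : ⟨M, x, u⟩ ∈ removalSwitchings A (j + 1)) :
    performSwitching ⟨M, x, u⟩ ∈ creationSwitchings A j := by
  obtain ⟨hMj, hx, hu⟩ := mem_removalSwitchings.1 hs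
  obtain ⟨hM, hcard⟩ := mem_pairingsInducing.1 hMj
  have hcard' := hM.card_internalPoints_switch hx hu
  rw [mem_internalPoints] at hx
  rw [mem_externalPoints] at hu
  have hxu : x ≠ u := ne_of_mem_of_not_mem hx.1 hu.1
  refine mem_creationSwitchings.2 ⟨mem_pairingsInducing.2 ⟨hM.isPairing_switch x u, by lia⟩, ?_, ?_,
    (hM.2 x).symm⟩
  · exact mem_boundaryPoints.2 ⟨hx.1, (hM.switch_apply_left hxu).symm ▸ hu.1⟩
  · exact mem_boundaryPoints.2 ⟨hx.2, (hM.switch_apply_partner hxu).symm ▸ hu.2⟩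

lemma performSwitching_mem_removalSwitchings {j : ℕ} (hs : ⟨M, x, u⟩ ∈ creationSwitchings A j) :
    performSwitching ⟨M, x, u⟩ ∈ removalSwitchings A (j + 1) := by
  obtain ⟨hMj, hx, hu, hxu⟩ := mem_creationSwitchings.1 hs
  obtain ⟨hM, hcard⟩ := mem_pairingsInducing.1 hMj
  rw [mem_boundaryPoints] at hx hu
  have hx' : x ∈ internalPoints A (switch M x u) :=
    mem_internalPoints.2 ⟨hx.1, (hM.switch_apply_left hxu).symm ▸ hu.1⟩
  have hMx : M x ∈ externalPoints A (switch M x u) :=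
    mem_externalPoints.2 ⟨hx.2, (hM.switch_apply_partner hxu).symm ▸ hu.2⟩
  have hcard' := (hM.isPairing_switch x u).card_internalPoints_switch hx' hMx
  rw [hM.switch_switch hxu] at hcard'
  exact mem_removalSwitchings.2 ⟨mem_pairingsInducing.2 ⟨hM.isPairing_switch x u, by lia⟩, hx', hMx⟩

lemma card_removalSwitchings_succ (A : Finset α) (j : ℕ) :
    #(removalSwitchings A (j + 1)) = #(creationSwitchings A j) := by
  refine card_nbij' performSwitching performSwitching
    (fun _ ↦ performSwitching_mem_creationSwitchings)
    (fun _ ↦ performSwitching_mem_removalSwitchings) ?_ ?_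
  · rintro ⟨M, x, u⟩ hs
    obtain ⟨hMj, hx, hu⟩ := mem_removalSwitchings.1 hs
    exact (mem_pairingsInducing.1 hMj).1.performSwitching_performSwitching <|
      ne_of_mem_of_not_mem (mem_internalPoints.1 hx).1 (mem_externalPoints.1 hu).1
  · rintro ⟨M, x, u⟩ hs
    obtain ⟨hMj, -, -, hxu⟩ := mem_creationSwitchings.1 hs
    exact (mem_pairingsInducing.1 hMj).1.performSwitching_performSwitching hxu

lemma card_removalSwitchings (A : Finset α) (j : ℕ) :
    (#(removalSwitchings A j) : ℤ) =
      #(pairingsInducing A j) * (2 * j * (Fintype.card α - 2 * #A + 2 * j)) := by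
  rw [removalSwitchings, card_sigma, Nat.cast_sum, ← nsmul_eq_mul]
  refine sum_eq_card_nsmul fun M hMj ↦ ?_
  obtain ⟨hM, hcard⟩ := mem_pairingsInducing.1 hMj
  have hA := card_internalPoints_add_card_boundaryPoints A M
  have hAc := hM.card_externalPoints_add_card_boundaryPoints (A := A)
  have hN := card_add_card_compl A
  have hext : (#(externalPoints A M) : ℤ) = Fintype.card α - 2 * #A + 2 * j := by lia
  simp [card_product, hcard, hext]

lemma card_creationSwitchings (A : Finset α) (j : ℕ) :
    (#(creationSwitchings A j) : ℤ) =
      #(pairingsInducing A j) * ((#A - 2 * j) * (#A - 2 * j - 1)) := by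
  rw [creationSwitchings, card_sigma, Nat.cast_sum, ← nsmul_eq_mul]
  refine sum_eq_card_nsmul fun M hMj ↦ ?_
  have hcard := (mem_pairingsInducing.1 hMj).2
  have hA := card_internalPoints_add_card_boundaryPoints A M
  have hbdry : (#(boundaryPoints A M) : ℤ) = #A - 2 * j := by lia
  rw [offDiag_card, Nat.cast_sub (Nat.le_mul_self _), Nat.cast_mul, hbdry]
  ring

lemma card_pairingsInducing_succ_mul (A : Finset α) (j : ℕ) :
    (#(pairingsInducing A (j + 1)) : ℤ) *
        (2 * (j + 1) * (Fintype.card α - 2 * #A + 2 * (j + 1))) =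
      #(pairingsInducing A j) * ((#A - 2 * j) * (#A - 2 * j - 1)) := by
  rw [← card_creationSwitchings, ← card_removalSwitchings_succ, card_removalSwitchings]
  push_cast
  rfl

lemma pairingsInducing_eq_empty {j : ℕ} (hj : #A < 2 * j) : pairingsInducing A j = ∅ := by
  refine eq_empty_of_forall_notMem fun M hMj ↦ ?_
  have hcard := (mem_pairingsInducing.1 hMj).2
  have hA := card_internalPoints_add_card_boundaryPoints A M
  lia

lemma card_pairingsInducing_succ_le {j : ℕ}
    (hj : (#A + 1) * (#A + 2) ≤ 2 * (j + 1) * (Fintype.card α + 3)) :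
    #(pairingsInducing A (j + 1)) ≤ #(pairingsInducing A j) := by
  rcases lt_or_ge #A (2 * (j + 1)) with hlt | hge
  · simp [pairingsInducing_eq_empty hlt]
  have ratio := card_pairingsInducing_succ_mul A j
  set removals : ℤ := 2 * (j + 1) * (Fintype.card α - 2 * #A + 2 * (j + 1)) with hremovals
  set creations : ℤ := (#A - 2 * j) * (#A - 2 * j - 1) with hcreations
  have creations_pos : 0 < creations := mul_pos (by lia) (by lia)
  have creations_le : creations ≤ removals := by
    rw [hcreations, hremovals]
    zify at hj
    linarith
  have scaled : (#(pairingsInducing A (j + 1)) : ℤ) * removals ≤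
      #(pairingsInducing A j) * removals :=
    ratio.trans_le (by gcongr)
  exact_mod_cast le_of_mul_le_mul_right scaled (creations_pos.trans_le creations_le)

lemma card_pairingsInducing_le {j₀ j : ℕ}
    (hj₀ : (#A + 1) * (#A + 2) ≤ 2 * (j₀ + 1) * (Fintype.card α + 3)) (hj : j₀ ≤ j) :
    #(pairingsInducing A j) ≤ #(pairingsInducing A j₀) := by
  induction j, hj using Nat.le_induction with
  | base => exact le_rfl
  | succ j hj ih => exact (card_pairingsInducing_succ_le (hj₀.trans (by gcongr))).trans ih

end Switching

lemma succ_mul_succ_succ_le_of_sq_le {a j N : ℕ} (h : a ^ 2 ≤ 2 * j * N) :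
    (a + 1) * (a + 2) ≤ 2 * (j + 1) * (N + 3) := by
  have am_gm : 3 * a ≤ 2 * N + 6 * j := by
    refine (Nat.pow_le_pow_iff_left two_ne_zero).1 ?_
    zify at h ⊢
    nlinarith [sq_nonneg ((N : ℤ) - 3 * j)]
  nlinarith

section ConfigurationModel

variable {n d : ℕ}

lemma mem_pairings {M : Perm (Fin n × Fin d)} : M ∈ pairings n d ↔ IsPairing M := by
  simp [pairings, IsPairing, Function.Involutive]

lemma edgesWithin_eq_iff {M : Perm (Fin n × Fin d)} (hM : IsPairing M) (S : Finset (Fin n))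
    (j : ℕ) : edgesWithin M S = j ↔ M ∈ pairingsInducing (S ×ˢ univ) j := by
  have half_edges : internalPoints (S ×ˢ univ) M =
      ({h | h.1 ∈ S ∧ (M h).1 ∈ S} : Finset (Fin n × Fin d)) := by
    ext h; simp [mem_internalPoints]
  have heven := hM.even_card_internalPoints (A := S ×ˢ univ)
  rw [mem_pairingsInducing, and_iff_right hM, edgesWithin, ← half_edges]
  grind

lemma sum_Zcount (n d i j : ℕ) :
    ∑ M ∈ pairings n d, Zcount n d i j M =
      ∑ S : Finset (Fin n) with #S = i,
        #(pairingsInducing (S ×ˢ (univ : Finset (Fin d))) j) := by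
  have double_count := sum_card_bipartiteAbove_eq_sum_card_bipartiteBelow
    (s := pairings n d) (t := {S : Finset (Fin n) | #S = i}) (fun M S ↦ edgesWithin M S = j)
  simp only [bipartiteAbove, bipartiteBelow, filter_filter] at double_count
  refine double_count.trans (sum_congr rfl fun S _ ↦ congrArg card ?_)
  ext M
  rw [mem_filter, mem_pairings]
  exact ⟨fun h ↦ (edgesWithin_eq_iff h.1 S j).1 h.2, fun h ↦
    have hM := (mem_pairingsInducing.1 h).1
    ⟨hM, (edgesWithin_eq_iff hM S j).2 h⟩⟩

lemma sum_Zcount_le {i j₀ j : ℕ} (hj₀ : d * i ^ 2 ≤ 2 * j₀ * n) (hj : j₀ ≤ j) :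
    ∑ M ∈ pairings n d, Zcount n d i j M ≤ ∑ M ∈ pairings n d, Zcount n d i j₀ M := by
  rw [sum_Zcount, sum_Zcount]
  refine sum_le_sum fun S hS ↦ ?_
  have hcard : #(S ×ˢ (univ : Finset (Fin d))) = d * i := by
    rw [card_product, (mem_filter.1 hS).2, card_fin, mul_comm]
  refine card_pairingsInducing_le (succ_mul_succ_succ_le_of_sq_le ?_) hj
  calc #(S ×ˢ (univ : Finset (Fin d))) ^ 2 = d * (d * i ^ 2) := by rw [hcard]; ring
    _ ≤ d * (2 * j₀ * n) := by gcongr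
    _ = 2 * j₀ * Fintype.card (Fin n × Fin d) := by simp; ring

lemma mul_sq_le_of_le_two_mul_div_mul {i ki : ℕ} {k : ℝ} (hi : (i : ℝ) ≤ 2 * k / d * n)
    (hki : (ki : ℝ) = k * i) : d * i ^ 2 ≤ 2 * ki * n := by
  rcases d.eq_zero_or_pos with rfl | hd
  · simp
  have real_bound : (d * i ^ 2 : ℝ) ≤ 2 * ki * n :=
    calc (d * i ^ 2 : ℝ) = d * i * i := by ring
      _ ≤ d * i * (2 * k / d * n) := by gcongr
      _ = 2 * ki * n := by rw [hki]; field_simp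
  exact_mod_cast real_bound

end ConfigurationModel

theorem EZ_max_at_ki_general (n d : ℕ) (_heven : Even (n * d)) (i j₀ j : ℕ)
    (hj₀ : d * i ^ 2 ≤ 2 * j₀ * n) (hj : j₀ ≤ j) : EZ n d i j ≤ EZ n d i j₀ := by
  unfold EZ
  gcongr ?_ / _
  exact_mod_cast sum_Zcount_le hj₀ hj

/-- Lemma: if `1 ≤ k ≤ d/2` and `1 ≤ i ≤ (2k/d) n` with `k·i` an integer, then for all
integers `j` with `k·i ≤ j ≤ (d/2)·i` one has `E[Z_{i,j}] ≤ E[Z_{i,ki}]`. -/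
theorem EZ_max_at_ki (n d : ℕ) (heven : Even (n * d)) (k : ℝ)
    (hk1 : 1 ≤ k) (hk2 : 2 * k ≤ d)
    (i : ℕ) (hi1 : 1 ≤ i) (hi2 : (i : ℝ) ≤ 2 * k / d * n)
    (ki : ℕ) (hki : (ki : ℝ) = k * i)
    (j : ℕ) (hj1 : ki ≤ j) (hj2 : 2 * j ≤ d * i) :
    EZ n d i j ≤ EZ n d i ki :=
  EZ_max_at_ki_general n d heven i ki j (mul_sq_le_of_le_two_mul_div_mul hi2 hki) hj1

end
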